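/- Let R be a commutative ring and F a matrix in R[t]^{l×m}. If for every maximal ideal m of R the matrix F(t) is equivalent to F(0) over the localized polynomial ring R_m[t], then F(t) is equivalent to F(0) over R[t]. -/

import Mathlib

/-- Two `l × m` matrices over a commutative ring are equivalent if they differ by
left/right multiplication by square matrices with unit determinant. -/
def MatrixEquiv {B : Type*} [CommRing B] {l m : ℕ}
    (F G : Matrix (Fin l) (Fin m) B) : Prop :=
  ∃ (U : Matrix (Fin l) (Fin l) B) (V : Matrix (Fin m) (Fin m) B),
    IsUnit U.det ∧ IsUnit V.det ∧ F = U * G * V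

open Polynomial

theorem Matrix.map_ringHom_one {ι B B' : Type*} [DecidableEq ι] [CommRing B] [CommRing B']
    (f : B →+* B') : (1 : Matrix ι ι B).map f = 1 :=
  Matrix.map_one f f.map_zero f.map_one

theorem Matrix.map_ringHom_sub {ι κ B B' : Type*} [CommRing B] [CommRing B']
    (f : B →+* B') (K L : Matrix ι κ B) : (K - L).map f = K.map f - L.map f :=
  Matrix.map_sub f (map_sub f) K L

namespace MatrixEquiv

variable {B B' : Type*} [CommRing B] [CommRing B'] {l m : ℕ}

theorem refl (F : Matrix (Fin l) (Fin m) B) : MatrixEquiv F F :=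
  ⟨1, 1, by simp, by simp, by simp⟩

theorem symm {F G : Matrix (Fin l) (Fin m) B} (h : MatrixEquiv F G) : MatrixEquiv G F := by
  obtain ⟨U, V, hU, hV, rfl⟩ := h
  refine ⟨U⁻¹, V⁻¹, U.isUnit_nonsing_inv_det hU, V.isUnit_nonsing_inv_det hV, ?_⟩
  rw [← Matrix.mul_assoc, ← Matrix.mul_assoc, U.nonsing_inv_mul hU, Matrix.one_mul,
    Matrix.mul_assoc, V.mul_nonsing_inv hV, Matrix.mul_one]

theorem trans {F G H : Matrix (Fin l) (Fin m) B} (h : MatrixEquiv F G) (h' : MatrixEquiv G H) :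
    MatrixEquiv F H := by
  obtain ⟨U, V, hU, hV, rfl⟩ := h
  obtain ⟨U', V', hU', hV', rfl⟩ := h'
  refine ⟨U * U', V' * V, ?_, ?_, by simp only [Matrix.mul_assoc]⟩
  · rw [Matrix.det_mul]
    exact hU.mul hU'
  · rw [Matrix.det_mul]
    exact hV'.mul hV

theorem map {F G : Matrix (Fin l) (Fin m) B} (h : MatrixEquiv F G) (f : B →+* B') :
    MatrixEquiv (F.map f) (G.map f) := by
  obtain ⟨U, V, hU, hV, rfl⟩ := h
  refine ⟨U.map f, V.map f, ?_, ?_, by simp only [Matrix.map_mul]⟩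
  · rw [← RingHom.mapMatrix_apply, ← RingHom.map_det]
    exact hU.map f
  · rw [← RingHom.mapMatrix_apply, ← RingHom.map_det]
    exact hV.map f

/-- An equivalence of a polynomial matrix with its constant term can be chosen to be the identity
at the origin. -/
theorem exists_normalized {F : Matrix (Fin l) (Fin m) B[X]}
    (h : MatrixEquiv F (F.map (C.comp constantCoeff : B[X] →+* B[X]))) :
    ∃ (U U' : Matrix (Fin l) (Fin l) B[X]) (V V' : Matrix (Fin m) (Fin m) B[X]),
      U * U' = 1 ∧ V * V' = 1 ∧
      U.map constantCoeff = 1 ∧ U'.map constantCoeff = 1 ∧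
      V.map constantCoeff = 1 ∧ V'.map constantCoeff = 1 ∧
      F = U * F.map (C.comp constantCoeff : B[X] →+* B[X]) * V := by
  obtain ⟨U, V, hU, hV, hF⟩ := h
  set e : B[X] →+* B[X] := C.comp constantCoeff with he
  have hce {n : ℕ} (N : Matrix (Fin n) (Fin n) B[X]) :
      (N.map e).map constantCoeff = N.map constantCoeff := by
    ext i j; simp [he]
  have hee (N : Matrix (Fin l) (Fin m) B[X]) : (N.map e).map e = N.map e := by
    ext i j; simp [he]
  have hU1 := U.mul_nonsing_inv hU
  have hU2 := U.nonsing_inv_mul hU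
  have hV1 := V.mul_nonsing_inv hV
  have hV2 := V.nonsing_inv_mul hV
  have hUe : U⁻¹.map e * U.map e = 1 := by rw [← Matrix.map_mul, hU2, Matrix.map_ringHom_one]
  have hVe : V.map e * V⁻¹.map e = 1 := by rw [← Matrix.map_mul, hV1, Matrix.map_ringHom_one]
  have hFe : F.map e = U.map e * F.map e * V.map e := by
    conv_lhs => rw [hF]
    rw [Matrix.map_mul, Matrix.map_mul, hee]
  refine ⟨U * U⁻¹.map e, U.map e * U⁻¹, V⁻¹.map e * V, V⁻¹ * V.map e, ?_, ?_, ?_, ?_, ?_, ?_, ?_⟩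
  · rw [Matrix.mul_assoc, ← Matrix.mul_assoc (U⁻¹.map e), hUe, Matrix.one_mul, hU1]
  · rw [Matrix.mul_assoc, ← Matrix.mul_assoc V, hV1, Matrix.one_mul, ← Matrix.map_mul, hV2,
      Matrix.map_ringHom_one]
  · rw [Matrix.map_mul, hce, ← Matrix.map_mul, hU1, Matrix.map_ringHom_one]
  · rw [Matrix.map_mul, hce, ← Matrix.map_mul, hU1, Matrix.map_ringHom_one]
  · rw [Matrix.map_mul, hce, ← Matrix.map_mul, hV2, Matrix.map_ringHom_one]
  · rw [Matrix.map_mul, hce, ← Matrix.map_mul, hV2, Matrix.map_ringHom_one]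
  · calc F = U * F.map e * V := hF
      _ = U * ((U⁻¹.map e * U.map e) * F.map e * (V.map e * V⁻¹.map e)) * V := by
        rw [hUe, hVe, Matrix.one_mul, Matrix.mul_one]
      _ = U * U⁻¹.map e * (U.map e * F.map e * V.map e) * (V⁻¹.map e * V) := by
        simp only [Matrix.mul_assoc]
      _ = _ := by rw [← hFe]

end MatrixEquiv

section Localization

variable {A A' : Type*} [CommRing A] [CommRing A'] [Algebra A A'] (M : Submonoid A)
  [IsLocalization M A']

theorem Polynomial.compRingHom_C_mul_X_compRingHom (s t : A) (p : A[X]) :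
    compRingHom (C t * X) (compRingHom (C s * X) p) = compRingHom (C (s * t) * X) p := by
  simp [comp_assoc, mul_assoc]

/-- A polynomial without constant term which vanishes over a localization vanishes after
rescaling the variable. -/
theorem Polynomial.exists_compRingHom_eq_zero {p : A[X]} (h0 : p.coeff 0 = 0)
    (hp : p.map (algebraMap A A') = 0) :
    ∃ s ∈ M, ∀ t, s ∣ t → compRingHom (C t * X) p = 0 := by
  obtain ⟨q, rfl⟩ := X_dvd_iff.mpr h0
  have hq : mapRingHom (algebraMap A A') q = 0 := by
    ext n
    simpa using congr_arg (coeff · (n + 1)) hp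
  let : Algebra A[X] A'[X] := (mapRingHom (algebraMap A A')).toAlgebra
  have := Polynomial.isLocalization M A'
  obtain ⟨⟨_, s, hs, rfl⟩, hc⟩ := (IsLocalization.map_eq_zero_iff (M.map C) A'[X] q).mp hq
  refine ⟨s, hs, ?_⟩
  rintro _ ⟨u, rfl⟩
  have := congr_arg (compRingHom (C (s * u) * X)) hc
  simp only [map_mul, coe_compRingHom_apply, C_comp, X_comp, map_zero] at this ⊢
  linear_combination (C u * X) * this

/-- A polynomial over a localization with integral constant term becomes integral after
rescaling the variable. -/
theorem Polynomial.exists_map_eq_compRingHom (q : A'[X]) (c : A)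
    (hc : q.coeff 0 = algebraMap A A' c) :
    ∃ s ∈ M, ∀ t, s ∣ t → ∃ p : A[X], p.coeff 0 = c ∧
      p.map (algebraMap A A') = compRingHom (C (algebraMap A A' t) * X) q := by
  let : Algebra A[X] A'[X] := (mapRingHom (algebraMap A A')).toAlgebra
  have := Polynomial.isLocalization M A'
  obtain ⟨⟨p, _, s, hs, rfl⟩, hp⟩ := IsLocalization.surj (M.map C) q.divX
  replace hp : q.divX * C (algebraMap A A' s) = p.map (algebraMap A A') := by
    have h : q.divX * (C s : A[X]).map (algebraMap A A') = p.map (algebraMap A A') := hp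
    rwa [map_C] at h
  refine ⟨s, hs, ?_⟩
  rintro _ ⟨u, rfl⟩
  refine ⟨C c + X * C u * p.comp (C (s * u) * X), by simp [mul_assoc], ?_⟩
  have h := q.divX_mul_X_add
  rw [hc] at h
  conv_rhs => rw [← h]
  simp only [Polynomial.map_add, Polynomial.map_mul, map_C, map_X, Polynomial.map_comp, ← hp,
    coe_compRingHom_apply, add_comp, mul_comp, C_comp, X_comp, map_mul]
  ring

theorem Matrix.exists_map_compRingHom_eq_zero {ι κ : Type*} [Fintype ι] [Fintype κ]
    {N : Matrix ι κ A[X]} (h0 : N.map constantCoeff = 0)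
    (hN : N.map (mapRingHom (algebraMap A A')) = 0) :
    ∃ s ∈ M, ∀ t, s ∣ t → N.map (compRingHom (C t * X)) = 0 := by
  choose s hs h using fun i j => exists_compRingHom_eq_zero (A' := A') M (p := N i j)
    (congr_fun₂ h0 i j) (congr_fun₂ hN i j)
  refine ⟨∏ i, ∏ j, s i j, prod_mem fun i _ => prod_mem fun j _ => hs i j, fun t ht => ?_⟩
  ext1 i j
  exact h i j t (((Finset.dvd_prod_of_mem (s i) (Finset.mem_univ j)).trans
    (Finset.dvd_prod_of_mem (fun i => ∏ j, s i j) (Finset.mem_univ i))).trans ht)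

theorem Matrix.exists_map_eq_map_compRingHom {ι : Type*} [Fintype ι] [DecidableEq ι]
    {N : Matrix ι ι A'[X]} (h0 : N.map constantCoeff = 1) :
    ∃ s ∈ M, ∀ t, s ∣ t → ∃ L : Matrix ι ι A[X], L.map constantCoeff = 1 ∧
      L.map (mapRingHom (algebraMap A A')) =
        N.map (compRingHom (C (algebraMap A A' t) * X)) := by
  choose s hs h using fun i j => exists_map_eq_compRingHom M (N i j)
    ((1 : Matrix ι ι A) i j) ((congr_fun₂ h0 i j).trans
      (by simp [Matrix.one_apply, apply_ite (algebraMap A A')]))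
  refine ⟨∏ i, ∏ j, s i j, prod_mem fun i _ => prod_mem fun j _ => hs i j, fun t ht => ?_⟩
  choose L hL hL' using fun i j =>
    h i j t (((Finset.dvd_prod_of_mem (s i) (Finset.mem_univ j)).trans
      (Finset.dvd_prod_of_mem (fun i => ∏ j, s i j) (Finset.mem_univ i))).trans ht)
  exact ⟨Matrix.of L, Matrix.ext hL, Matrix.ext hL'⟩

/-- If a polynomial matrix is equivalent to its constant term over a localization, then it is so
already over the base after rescaling the variable. -/
theorem MatrixEquiv.exists_map_compRingHom {l m : ℕ} (F : Matrix (Fin l) (Fin m) A[X])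
    (h : MatrixEquiv (F.map (mapRingHom (algebraMap A A')))
      ((F.map (mapRingHom (algebraMap A A'))).map (C.comp constantCoeff : A'[X] →+* A'[X]))) :
    ∃ s ∈ M, MatrixEquiv (F.map (compRingHom (C s * X)))
      (F.map (C.comp constantCoeff : A[X] →+* A[X])) := by
  obtain ⟨U, U', V, V', hU, hV, hU0, hU'0, hV0, hV'0, hF⟩ := h.exists_normalized
  obtain ⟨a, ha, hLU⟩ := Matrix.exists_map_eq_map_compRingHom M hU0
  obtain ⟨a', ha', hLU'⟩ := Matrix.exists_map_eq_map_compRingHom M hU'0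
  obtain ⟨b, hb, hLV⟩ := Matrix.exists_map_eq_map_compRingHom M hV0
  obtain ⟨b', hb', hLV'⟩ := Matrix.exists_map_eq_map_compRingHom M hV'0
  set s := a * a' * (b * b') with hs
  have hsM : s ∈ M := M.mul_mem (M.mul_mem ha ha') (M.mul_mem hb hb')
  obtain ⟨P, hP0, hP⟩ := hLU s ⟨a' * (b * b'), by rw [hs]; ring⟩
  obtain ⟨P', hP'0, hP'⟩ := hLU' s ⟨a * (b * b'), by rw [hs]; ring⟩
  obtain ⟨Q, hQ0, hQ⟩ := hLV s ⟨a * a' * b', by rw [hs]; ring⟩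
  obtain ⟨Q', hQ'0, hQ'⟩ := hLV' s ⟨a * a' * b, by rw [hs]; ring⟩
  set e : A[X] →+* A[X] := C.comp constantCoeff with he
  obtain ⟨c, hc, hcP⟩ := Matrix.exists_map_compRingHom_eq_zero (A' := A') M (N := P * P' - 1)
    (by rw [Matrix.map_ringHom_sub, Matrix.map_mul, hP0, hP'0, Matrix.map_ringHom_one, mul_one,
      sub_self])
    (by rw [Matrix.map_ringHom_sub, Matrix.map_mul, hP, hP', Matrix.map_ringHom_one,
      ← Matrix.map_mul, hU, Matrix.map_ringHom_one, sub_self])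
  obtain ⟨d, hd, hdQ⟩ := Matrix.exists_map_compRingHom_eq_zero (A' := A') M (N := Q * Q' - 1)
    (by rw [Matrix.map_ringHom_sub, Matrix.map_mul, hQ0, hQ'0, Matrix.map_ringHom_one, mul_one,
      sub_self])
    (by rw [Matrix.map_ringHom_sub, Matrix.map_mul, hQ, hQ', Matrix.map_ringHom_one,
      ← Matrix.map_mul, hV, Matrix.map_ringHom_one, sub_self])
  obtain ⟨r, hr, hrF⟩ := Matrix.exists_map_compRingHom_eq_zero (A' := A') M
    (N := F.map (compRingHom (C s * X)) - P * F.map e * Q)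
    (by
      rw [Matrix.map_ringHom_sub, Matrix.map_mul, Matrix.map_mul, hP0, hQ0, Matrix.one_mul,
        Matrix.mul_one, sub_eq_zero]
      ext i j
      simp [he])
    (by
      have h1 : (F.map (compRingHom (C s * X))).map (mapRingHom (algebraMap A A')) =
          (F.map (mapRingHom (algebraMap A A'))).map (compRingHom (C (algebraMap A A' s) * X)) := by
        ext1 i j
        simp [Polynomial.map_comp]
      have h2 : (F.map e).map (mapRingHom (algebraMap A A')) =
          ((F.map (mapRingHom (algebraMap A A'))).map
            (C.comp constantCoeff : A'[X] →+* A'[X])).map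
          (compRingHom (C (algebraMap A A' s) * X)) := by
        ext1 i j
        simp [he]
      rw [Matrix.map_ringHom_sub, Matrix.map_mul, Matrix.map_mul, hP, hQ, h1, h2, ← Matrix.map_mul,
        ← Matrix.map_mul, ← hF, sub_self])
  set t := c * d * r with ht
  have h1 := hcP t ⟨d * r, by rw [ht]; ring⟩
  have h2 := hdQ t ⟨c * r, by rw [ht]; ring⟩
  have h3 := hrF t ⟨c * d, by rw [ht]; ring⟩
  rw [Matrix.map_ringHom_sub, sub_eq_zero, Matrix.map_mul] at h1 h2 h3
  rw [Matrix.map_ringHom_one] at h1 h2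
  refine ⟨s * t, M.mul_mem hsM (M.mul_mem (M.mul_mem hc hd) hr), P.map (compRingHom (C t * X)),
    Q.map (compRingHom (C t * X)), Matrix.isUnit_det_of_right_inverse h1,
    Matrix.isUnit_det_of_right_inverse h2, ?_⟩
  have h4 : F.map (compRingHom (C (s * t) * X)) =
      (F.map (compRingHom (C s * X))).map (compRingHom (C t * X)) := by
    ext1 i j
    exact (compRingHom_C_mul_X_compRingHom s t (F i j)).symm
  have h5 : (F.map e).map (compRingHom (C t * X)) = F.map e := by
    ext1 i j
    simp [he]
  rw [h4, h3, Matrix.map_mul, h5]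

end Localization

universe u

/-- The Quillen ideal of a polynomial matrix `F`: those `a` such that `F(x + a y)` is equivalent
to `F(x)` for all `x`, `y` in all algebras over the base ring. -/
def quillenIdeal {R : Type u} [CommRing R] {l m : ℕ} (F : Matrix (Fin l) (Fin m) R[X]) :
    Ideal R where
  carrier := {a | ∀ (S : Type u) [CommRing S] [Algebra R S] (x y : S),
    MatrixEquiv (F.map (aeval (x + a • y))) (F.map (aeval x))}
  zero_mem' S _ _ x y := by
    rw [zero_smul, add_zero]
    exact .refl _
  add_mem' {a b} ha hb S _ _ x y := by
    rw [add_smul, add_comm (a • y), ← add_assoc]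
    exact (ha S (x + b • y) y).trans (hb S x y)
  smul_mem' r a ha S _ _ x y := by
    rw [smul_eq_mul, mul_comm, mul_smul]
    exact ha S x (r • y)

theorem exists_mem_quillenIdeal {R T : Type*} [CommRing R] [CommRing T] [Algebra R T] {l m : ℕ}
    (M : Submonoid R) [IsLocalization M T] (F : Matrix (Fin l) (Fin m) R[X])
    (h : MatrixEquiv (F.map (Polynomial.map (algebraMap R T)))
      (F.map (fun f => C (algebraMap R T (f.eval 0))))) :
    ∃ s ∈ M, s ∈ quillenIdeal F := by
  let : Algebra R[X] T[X] := (mapRingHom (algebraMap R T)).toAlgebra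
  have := Polynomial.isLocalization M T
  have key (z : T[X][X]) : MatrixEquiv (F.map (aeval z))
      (F.map (fun f => C (C (algebraMap R T (f.eval 0))))) := by
    convert h.map (eval₂RingHom (C.comp C) z) using 1
    · ext1 i j
      simp [eval₂_map, aeval_def]
      rfl
    · ext1 i j
      simp
  obtain ⟨_, ⟨s, hs, rfl⟩, hE⟩ := MatrixEquiv.exists_map_compRingHom (A' := T[X])
    (M.map C) (F.map (aeval (C X + X : R[X][X]))) (by
      convert (key (C X + X)).trans (key (C X)).symm using 1
      · ext1 i j
        refine RingHom.congr_fun (f := (mapRingHom (algebraMap R[X] T[X])).comp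
          (aeval (C X + X : R[X][X])).toRingHom) (g := (aeval (C X + X : T[X][X])).toRingHom)
          (ringHom_ext (fun a => ?_) ?_) (F i j)
        · simp [Polynomial.algebraMap_apply]
        · simp
      · ext1 i j
        refine RingHom.congr_fun (f := (C.comp constantCoeff).comp
          ((mapRingHom (algebraMap R[X] T[X])).comp (aeval (C X + X : R[X][X])).toRingHom))
          (g := (aeval (C X : T[X][X])).toRingHom) (ringHom_ext (fun a => ?_) ?_) (F i j)
        · simp [Polynomial.algebraMap_apply]
        · simp)
  refine ⟨s, hs, fun S _ _ x y => ?_⟩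
  convert hE.map (eval₂RingHom (aeval x : R[X] →ₐ[R] S).toRingHom y) using 1
  · ext1 i j
    refine RingHom.congr_fun (f := (aeval (x + s • y)).toRingHom)
      (g := (eval₂RingHom (aeval x : R[X] →ₐ[R] S).toRingHom y).comp
        ((compRingHom (C (C s) * X)).comp (aeval (C X + X : R[X][X])).toRingHom))
      (ringHom_ext (fun a => ?_) ?_) (F i j)
    · simp [Polynomial.algebraMap_apply]
    · simp [Algebra.smul_def]
  · ext1 i j
    refine RingHom.congr_fun (f := (aeval x).toRingHom)
      (g := (eval₂RingHom (aeval x : R[X] →ₐ[R] S).toRingHom y).comp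
        ((C.comp constantCoeff).comp (aeval (C X + X : R[X][X])).toRingHom))
      (ringHom_ext (fun a => ?_) ?_) (F i j)
    · simp [Polynomial.algebraMap_apply]
    · simp

/-- if `F(t) ∼ F(0)` over `R_P[t]` for every maximal ideal `P` of `R`,
then `F(t) ∼ F(0)` over `R[t]`. -/
theorem stmt2 {R : Type*} [CommRing R] {l m : ℕ}
    (F : Matrix (Fin l) (Fin m) (Polynomial R))
    (h : ∀ (P : Ideal R) [P.IsMaximal],
      MatrixEquiv
        (F.map (Polynomial.map (algebraMap R (Localization.AtPrime P))))
        (F.map (fun f => Polynomial.C (algebraMap R (Localization.AtPrime P) (f.eval 0))))) :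
    MatrixEquiv F (F.map (fun f => Polynomial.C (f.eval 0))) := by
  have htop : quillenIdeal F = ⊤ := by
    by_contra hne
    obtain ⟨P, hP, hle⟩ := Ideal.exists_le_maximal _ hne
    obtain ⟨s, hsP, hs⟩ := exists_mem_quillenIdeal P.primeCompl F (h P)
    exact hsP (hle hs)
  have h1 : (1 : R) ∈ quillenIdeal F := htop ▸ Submodule.mem_top
  convert h1 R[X] 0 X using 1
  · ext1 i j
    simp
  · ext1 i j
    simp [aeval_def, eval₂_at_zero, coeff_zero_eq_eval_zero]
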